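/- arXiv:2301.07353 — 3 statements merged into one kernel-verified Lean document; each statement's English description precedes it below -/
import Mathlib

section
/- Fix n ≥ 1 and let Δ : (Fin n → ℝ≥0) → ℝ be a function such that whenever p, q : Fin n → ℝ≥0 satisfy p ≽₀,₁ q, then Δ(p) ≤ Δ(q). Suppose there is a continuous function Λ : (Fin n → ℝ≥0) → ℝ such that Δ(p) = Λ(p) for every p all of whose entries are rational. Then Δ(p) = Λ(p) for every p : Fin n → ℝ≥0 with Σ_i p_i ∈ ℚ. -/
open scoped BigOperators NNReal

noncomputable section

/-- A probability vector on a finite index type. -/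
def IsProbVec {ι : Type*} [Fintype ι] (p : ι → ℝ) : Prop :=
  (∀ i, 0 ≤ p i) ∧ ∑ i, p i = 1

/-- A (column-)stochastic matrix: nonnegative entries, every column sums to `1`. -/
def IsStochastic {ι κ : Type*} [Fintype ι] [Fintype κ] (T : ι → κ → ℝ) : Prop :=
  (∀ i j, 0 ≤ T i j) ∧ ∀ j, ∑ i, T i j = 1

/-- Matrix–vector multiplication. -/
def matVec {ι κ : Type*} [Fintype κ] (T : ι → κ → ℝ) (v : κ → ℝ) : ι → ℝ :=
  fun i => ∑ j, T i j * v j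

/-- Kronecker product of two vectors. -/
def kron {ι κ : Type*} (p : ι → ℝ) (q : κ → ℝ) : ι × κ → ℝ :=
  fun x => p x.1 * q x.2

/-- `n`-fold Kronecker power of a vector. -/
def kpow {ι : Type*} (p : ι → ℝ) (n : ℕ) : (Fin n → ι) → ℝ :=
  fun f => ∏ j, p (f j)

/-- Kronecker product reindexed along `Fin (m * n)`. -/
def kronFin {m n : ℕ} (p : Fin m → ℝ) (q : Fin n → ℝ) : Fin (m * n) → ℝ :=
  fun i => kron p q (finProdFinEquiv.symm i)

/-- The sum of the `k` largest entries of a nonnegative vector, expressed as the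
largest sum over subsets of cardinality at most `k`. -/
def topSum {ι : Type*} [Fintype ι] (p : ι → ℝ) (k : ℕ) : ℝ :=
  ⨆ s ∈ {s : Finset ι | s.card ≤ k}, ∑ i ∈ s, p i

/-- Majorization for nonnegative vectors (possibly of different lengths):
equal total sums, and for each `k` the sum of the `k` largest entries of `p` is
at least that of `q`. -/
def Majorizes {ι κ : Type*} [Fintype ι] [Fintype κ] (p : ι → ℝ) (q : κ → ℝ) : Prop :=
  (∑ i, p i = ∑ j, q j) ∧ ∀ k : ℕ, topSum q k ≤ topSum p k

/-- The size of the support, `‖p‖₀`. -/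
def supp0 {ι : Type*} [Fintype ι] (p : ι → ℝ) : ℕ :=
  (Finset.univ.filter fun i => p i ≠ 0).card

/-- Entrywise nonnegativity. -/
def NonnegVec {n : ℕ} (p : Fin n → ℝ) : Prop := ∀ i, 0 ≤ p i

/-- The modified majorization preorder `≽₀,₁`: majorization plus equality of
support sizes. -/
def MajMod {ι κ : Type*} [Fintype ι] [Fintype κ] (p : ι → ℝ) (q : κ → ℝ) : Prop :=
  Majorizes p q ∧ supp0 p = supp0 q

/-- `f_α(p) = ∑_{i ∈ supp p} (p i)^α`. -/
def fA {ι : Type*} [Fintype ι] (α : ℝ) (p : ι → ℝ) : ℝ :=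
  ∑ i, if p i = 0 then 0 else p i ^ α

/-- Shannon entropy (the terms with `p i = 0` vanish). -/
def H1ent {ι : Type*} [Fintype ι] (p : ι → ℝ) : ℝ := -∑ i, p i * Real.log (p i)

/-- `H₀'(p) = ∑_{i ∈ supp p} log p_i`. -/
def H0' {ι : Type*} [Fintype ι] (p : ι → ℝ) : ℝ :=
  ∑ i, if p i = 0 then 0 else Real.log (p i)

/-- Rényi entropy of order `α` (with `α = 1` the Shannon entropy). -/
def Hent {ι : Type*} [Fintype ι] (α : ℝ) (p : ι → ℝ) : ℝ :=
  if α = 1 then -∑ i, p i * Real.log (p i)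
  else (1 / (1 - α)) * Real.log (∑ i, if p i = 0 then 0 else p i ^ α)

/-- Min-entropy `H_∞(p) = - log max_i p_i`. -/
def HentInf {ι : Type*} [Fintype ι] (p : ι → ℝ) : ℝ := -Real.log (⨆ i, p i)

/-- Kullback–Leibler divergence (the terms with `p i = 0` vanish). -/
def KL {n : ℕ} (p q : Fin n → ℝ) : ℝ :=
  ∑ i, p i * Real.log (p i / q i)

/-- Rényi divergence of order `α` for vectors with common support. -/
def Renyi {n : ℕ} (α : ℝ) (p q : Fin n → ℝ) : ℝ :=
  if α = 1 then ∑ i, p i * Real.log (p i / q i)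
  else (1 / (α - 1)) * Real.log (∑ i, if p i = 0 then 0 else p i ^ α * q i ^ (1 - α))

/-- Max-divergence `D_∞(p‖q) = max_{i ∈ supp q} log (p_i / q_i)`. -/
def RenyiInf {n : ℕ} (p q : Fin n → ℝ) : ℝ :=
  ⨆ i ∈ Finset.univ.filter (fun i => q i ≠ 0), Real.log (p i / q i)

/-- Rényi divergence with values in the extended reals `[0, ∞]`. -/
def RenyiE {n : ℕ} (α : ℝ) (p q : Fin n → ℝ) : EReal :=
  if α = 1 then
    (if ∀ i, p i ≠ 0 → q i ≠ 0 then ((∑ i, p i * Real.log (p i / q i) : ℝ) : EReal) else ⊤)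
  else if α < 1 then
    (if ∃ i, p i ≠ 0 ∧ q i ≠ 0 then
      (((1 / (α - 1)) *
        Real.log (∑ i, if p i = 0 ∨ q i = 0 then 0 else p i ^ α * q i ^ (1 - α)) : ℝ) : EReal)
    else (⊤ : EReal))
  else
    (if ∀ i, p i ≠ 0 → q i ≠ 0 then
      (((1 / (α - 1)) *
        Real.log (∑ i, if p i = 0 then 0 else p i ^ α * q i ^ (1 - α)) : ℝ) : EReal)
    else (⊤ : EReal))

/-- The common support of a tuple of vectors. -/
def suppIdx {d n : ℕ} (P : Fin d → Fin n → ℝ) : Finset (Fin n) :=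
  Finset.univ.filter fun i => ∃ k, P k i ≠ 0

/-- `f_α(P) = ∑_{i ∈ I} ∏_k (p_i^{(k)})^{α_k}` with `I` the common support. -/
def fMat {d n : ℕ} (α : Fin d → ℝ) (P : Fin d → Fin n → ℝ) : ℝ :=
  ∑ i ∈ suppIdx P, ∏ k, P k i ^ α k

/-- The matrix `α`-divergence `D_α`. -/
def Dmat {d n : ℕ} (α : Fin d → ℝ) (P : Fin d → Fin n → ℝ) : ℝ :=
  (1 / ((⨆ k, α k) - 1)) * Real.log (∑ i ∈ suppIdx P, ∏ k, P k i ^ α k)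

/-- The tropical matrix divergence `D^𝕋_β`. -/
def DmatT {d n : ℕ} (β : Fin d → ℝ) (P : Fin d → Fin n → ℝ) : ℝ :=
  (1 / (⨆ k, β k)) * Real.log (⨆ i ∈ suppIdx P, ∏ k, P k i ^ β k)

/-- Membership in `A₊`: entries summing to `1`, all nonnegative. -/
def memAplus {d : ℕ} (α : Fin d → ℝ) : Prop := (∑ k, α k = 1) ∧ ∀ k, 0 ≤ α k

/-- Membership in `A₋`: entries summing to `1`, one entry `≥ 1`, the others `≤ 0`. -/
def memAminus {d : ℕ} (α : Fin d → ℝ) : Prop :=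
  (∑ k, α k = 1) ∧ ∃ k, 1 ≤ α k ∧ ∀ l, l ≠ k → α l ≤ 0

/-- Membership in `B₋`: entries summing to `0`, one entry `≥ 0`, the others `≤ 0`. -/
def memBminus {d : ℕ} (β : Fin d → ℝ) : Prop :=
  (∑ k, β k = 0) ∧ ∃ k, 0 ≤ β k ∧ ∀ l, l ≠ k → β l ≤ 0

/-- `α` is none of the standard basis vectors `e₁, …, e_d`. -/
def notBasis {d : ℕ} (α : Fin d → ℝ) : Prop := ∀ k, α ≠ Pi.single k 1

/-- ℓ¹-distance of two vectors, padding with zeros to a common length. -/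
def l1PadDist {m n : ℕ} (p : Fin m → ℝ) (q : Fin n → ℝ) : ℝ :=
  ∑ i : Fin (max m n),
    |(if h : (i : ℕ) < m then p ⟨(i : ℕ), h⟩ else 0) -
      (if h : (i : ℕ) < n then q ⟨(i : ℕ), h⟩ else 0)|

/-- Index type of the direct sum `⨁_{s=0}^{n-1} p^{⊗(n-1-s)} ⊗ q^{⊗s}`. -/
abbrev TrickIdx (m m' n : ℕ) : Type :=
  Σ s : Fin n, (Fin (n - 1 - (s : ℕ)) → Fin m) × (Fin (s : ℕ) → Fin m')

/-- The standard catalyst `(1/n) ⨁_{s=0}^{n-1} p^{⊗(n-1-s)} ⊗ q^{⊗s}`. -/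
def trick {m m' : ℕ} (p : Fin m → ℝ) (q : Fin m' → ℝ) (n : ℕ) : TrickIdx m m' n → ℝ :=
  fun x => (1 / (n : ℝ)) * (kpow p (n - 1 - (x.1 : ℕ)) x.2.1 * kpow q (x.1 : ℕ) x.2.2)

/-- A valid tuple: nonnegative entries and common support across the tuple. -/
def TupOK {d n : ℕ} (P : Fin d → Fin n → ℝ) : Prop :=
  (∀ k i, 0 ≤ P k i) ∧ ∀ k l i, P k i ≠ 0 ↔ P l i ≠ 0

/-- Matrix majorization of tuples: a single stochastic matrix carrying each column
of `P` to the corresponding column of `Q`. -/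
def TupMaj {d m n : ℕ} (P : Fin d → Fin m → ℝ) (Q : Fin d → Fin n → ℝ) : Prop :=
  ∃ T : Fin n → Fin m → ℝ, IsStochastic T ∧ ∀ k, matVec T (P k) = Q k

theorem topSum_le_of {n : ℕ} (x y : Fin n → ℝ) (k : ℕ) (hy : ∀ i, 0 ≤ y i)
    (h : ∀ T : Finset (Fin n), ∃ T' : Finset (Fin n), T'.card = T.card ∧
      ∑ i ∈ T, x i ≤ ∑ i ∈ T', y i) : topSum x k ≤ topSum y k := by
  have hb : ∀ T : Finset (Fin n), T.card ≤ k → ∑ i ∈ T, y i ≤ topSum y k := by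
    intro T hT
    unfold topSum
    have h1 : ∑ i ∈ T, y i = ⨆ (_ : T ∈ {s : Finset (Fin n) | s.card ≤ k}), ∑ i ∈ T, y i := by
      rw [ciSup_pos]; exact hT
    rw [h1]
    exact le_ciSup (f := fun T : Finset (Fin n) =>
      ⨆ (_ : T ∈ {s : Finset (Fin n) | s.card ≤ k}), ∑ i ∈ T, y i)
      (Set.finite_range _).bddAbove T
  have h0 : 0 ≤ topSum y k := by simpa using hb ∅ (by simp)
  unfold topSum at h0 ⊢
  refine Real.iSup_le (fun T => Real.iSup_le (fun hT => ?_) h0) h0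
  obtain ⟨T', hc, hle⟩ := h T
  exact hle.trans (hb T' (hc ▸ hT))

theorem exchange {n : ℕ} (x y : Fin n → ℝ) (A : Finset (Fin n))
    (hsum : ∑ i, x i = ∑ i, y i) (hA : ∀ i ∈ A, x i ≤ y i) (hnA : ∀ i, i ∉ A → y i ≤ x i)
    (hord : ∀ i, i ∉ A → ∀ j ∈ A, x i ≤ x j) :
    ∀ (a : ℕ) (T : Finset (Fin n)), (T \ A).card = a →
      ∃ T' : Finset (Fin n), T'.card = T.card ∧ ∑ i ∈ T, x i ≤ ∑ i ∈ T', y i := by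
  intro a
  induction a with
  | zero =>
    intro T hT
    rw [Finset.card_eq_zero, Finset.sdiff_eq_empty_iff_subset] at hT
    exact ⟨T, rfl, Finset.sum_le_sum fun i hi => hA i (hT hi)⟩
  | succ a ih =>
    intro T hT
    by_cases hsub : A ⊆ T
    · refine ⟨T, rfl, ?_⟩
      have h1 := Finset.sum_add_sum_compl T x
      have h2 := Finset.sum_add_sum_compl T y
      have h3 : ∑ i ∈ Tᶜ, y i ≤ ∑ i ∈ Tᶜ, x i :=
        Finset.sum_le_sum fun i hi => hnA i fun h => (Finset.mem_compl.1 hi) (hsub h)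
      linarith
    · obtain ⟨j, hjA, hjT⟩ := Finset.not_subset.1 hsub
      have hne : (T \ A).Nonempty := by
        rw [← Finset.card_pos]; omega
      obtain ⟨i, hi⟩ := hne
      have hi' := Finset.mem_sdiff.1 hi
      have hj' : j ∉ T.erase i := fun h => hjT (Finset.mem_of_mem_erase h)
      have hs : (insert j (T.erase i)) \ A = (T \ A).erase i := by
        rw [Finset.insert_sdiff_of_mem _ hjA, Finset.erase_sdiff_comm]
      obtain ⟨T', hc, hle⟩ := ih (insert j (T.erase i)) (by
        rw [hs, Finset.card_erase_of_mem hi]; omega)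
      refine ⟨T', ?_, ?_⟩
      · rw [hc, Finset.card_insert_of_notMem hj', Finset.card_erase_add_one hi'.1]
      · rw [Finset.sum_insert hj'] at hle
        have := Finset.add_sum_erase T x hi'.1
        have := hord i hi'.2 j hjA
        linarith

/-- The perturbation of a vector: `a` on `A`, constant on `G`, total sum `s`. -/
def pert {n : ℕ} (A G : Finset (Fin n)) (s : ℝ) (a : Fin n → ℝ) : Fin n → ℝ :=
  fun i => if i ∈ A then a i else if i ∈ G then (s - ∑ j ∈ A, a j) / (G.card : ℝ) else 0

theorem sum_pert {n : ℕ} (A G : Finset (Fin n)) (hG : G.Nonempty) (hd : Disjoint A G)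
    (s : ℝ) (a : Fin n → ℝ) : ∑ i, pert A G s a i = s := by
  have hg : (G.card : ℝ) ≠ 0 := by exact_mod_cast hG.card_pos.ne'
  have h1 : ∀ i, pert A G s a i = (if i ∈ A then a i else 0) +
      (if i ∈ G then (s - ∑ j ∈ A, a j) / (G.card : ℝ) else 0) := by
    intro i
    unfold pert
    by_cases hA : i ∈ A
    · simp [hA, Finset.disjoint_left.1 hd hA]
    · simp [hA]
  simp only [h1, Finset.sum_add_distrib, Finset.sum_ite_mem, Finset.univ_inter,
    Finset.sum_const, nsmul_eq_mul]
  field_simp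
  ring

theorem continuous_pert {n : ℕ} (A G : Finset (Fin n)) (s : ℝ) : Continuous (pert A G s) := by
  refine continuous_pi fun i => ?_
  unfold pert
  split_ifs <;> fun_prop

/-- All the properties needed of approximating sequences. -/
theorem approx_core {n : ℕ} (p : Fin n → ℝ≥0) (hp : ∃ i, p i ≠ 0) (s : ℚ)
    (hs : ∑ i, (p i : ℝ) = s) :
    ∃ A : Finset (Fin n), ∃ c : (Fin n → ℝ) → Fin n → ℝ, Continuous c ∧
      c (fun i => (p i : ℝ)) = (fun i => (p i : ℝ)) ∧
      (∀ a, ∑ i, c a i = s) ∧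
      (∀ a, ∀ i ∈ A, c a i = a i) ∧
      (∀ a b, (∀ i, a i ≤ b i) → ∀ i, i ∉ A → c b i ≤ c a i) ∧
      (∀ u : Fin n → ℚ, ∀ i, ∃ r : ℚ, c (fun i => (u i : ℝ)) i = r) ∧
      (∀ i, i ∉ A → ∀ j ∈ A, p i < p j) ∧
      (∀ i, p i = 0 → ∀ a, c a i = 0) := by
  classical
  obtain ⟨i1, hi1⟩ := hp
  obtain ⟨i0, hi0, hmin⟩ := Finset.exists_min_image (Finset.univ.filter fun i => p i ≠ 0) p
    ⟨i1, by simp [hi1]⟩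
  simp only [Finset.mem_filter, Finset.mem_univ, true_and] at hi0 hmin
  set A := Finset.univ.filter fun i => p i0 < p i with hAdef
  set G := Finset.univ.filter fun i => p i = p i0 with hGdef
  have memA : ∀ i, i ∈ A ↔ p i0 < p i := by simp [hAdef]
  have memG : ∀ i, i ∈ G ↔ p i = p i0 := by simp [hGdef]
  have hG : G.Nonempty := ⟨i0, by simp [memG]⟩
  have hd : Disjoint A G := by
    rw [Finset.disjoint_left]; intro i hA hG
    rw [memA] at hA; rw [memG] at hG
    exact absurd hG hA.ne'
  have hg : (0 : ℝ) < (G.card : ℝ) := by exact_mod_cast hG.card_pos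
  have hzero : ∀ i, i ∉ A → i ∉ G → p i = 0 := by
    intro i hA hG
    rw [memA] at hA; rw [memG] at hG
    by_contra h
    exact hG (le_antisymm (not_lt.1 hA) (hmin i h))
  refine ⟨A, pert A G s, continuous_pert A G s, ?_, sum_pert A G hG hd s, ?_, ?_, ?_, ?_, ?_⟩
  · have hsplit : ∑ i, (p i : ℝ) = ∑ i ∈ A, (p i : ℝ) + (G.card : ℝ) * p i0 := by
      rw [← Finset.sum_subset (Finset.subset_univ (A ∪ G)), Finset.sum_union hd]
      · congr 1
        rw [Finset.sum_congr rfl (g := fun _ => (p i0 : ℝ)), Finset.sum_const, nsmul_eq_mul]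
        intro i hi
        rw [(memG i).1 hi]
      · intro i _ hi
        rw [Finset.mem_union, not_or] at hi
        simp [hzero i hi.1 hi.2]
    funext i
    unfold pert
    split_ifs with h1 h2
    · rfl
    · rw [← hs, hsplit, (memG i).1 h2]
      field_simp
      ring
    · simp [hzero i h1 h2]
  · intro a i hi; simp [pert, hi]
  · intro a b hab i hi
    simp only [pert, hi, if_false]
    split_ifs
    · gcongr
      exact hab _
    · exact le_rfl
  · intro u i
    unfold pert
    split_ifs
    · exact ⟨u i, rfl⟩
    · exact ⟨(s - ∑ j ∈ A, u j) / (G.card : ℚ), by push_cast; rfl⟩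
    · exact ⟨0, by simp⟩
  · intro i hi j hj
    rw [memA] at hi hj
    exact (not_lt.1 hi).trans_lt hj
  · intro i hi a
    have h1 : i ∉ A := by rw [memA, hi]; simp
    have h2 : i ∉ G := by rw [memG, hi]; exact fun h => hi0 h.symm
    simp [pert, h1, h2]

theorem majMod_of {n : ℕ} (x y : Fin n → ℝ≥0) (A : Finset (Fin n))
    (hsum : ∑ i, (x i : ℝ) = ∑ i, (y i : ℝ)) (hA : ∀ i ∈ A, x i ≤ y i)
    (hnA : ∀ i, i ∉ A → y i ≤ x i)
    (hord : ∀ i, i ∉ A → ∀ j ∈ A, x i ≤ x j) (hz : ∀ i, x i = 0 ↔ y i = 0) :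
    MajMod (fun i => (y i : ℝ)) (fun i => (x i : ℝ)) := by
  refine ⟨⟨hsum.symm, fun k => ?_⟩, ?_⟩
  · refine topSum_le_of _ _ k (fun i => (y i).2) fun T => ?_
    exact exchange (fun i => (x i : ℝ)) (fun i => (y i : ℝ)) A hsum
      (fun i hi => by exact_mod_cast hA i hi) (fun i hi => by exact_mod_cast hnA i hi)
      (fun i hi j hj => by exact_mod_cast hord i hi j hj) _ T rfl
  · unfold supp0
    congr 1
    ext i
    simp [hz i]

/-- **Approximation lemma for monotone functionals.**  If `Δ` on nonnegative
vectors of fixed length `n` is antitone for the modified majorization preorder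
`≽₀,₁` and agrees with a continuous function `Λ` on all vectors with rational
entries, then it agrees with `Λ` on every vector whose total sum is
rational. -/
theorem monotone_functional_rational_approximation
    {n : ℕ} (hn : 1 ≤ n) (Δ Λ : (Fin n → ℝ≥0) → ℝ)
    (hmono : ∀ p q : Fin n → ℝ≥0,
      MajMod (fun i => (p i : ℝ)) (fun i => (q i : ℝ)) → Δ p ≤ Δ q)
    (hΛ : Continuous Λ)
    (hrat : ∀ p : Fin n → ℝ≥0, (∀ i, ∃ a : ℚ, (p i : ℝ) = a) → Δ p = Λ p) :
    ∀ p : Fin n → ℝ≥0, (∃ a : ℚ, ((∑ i, p i : ℝ≥0) : ℝ) = a) → Δ p = Λ p := by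
  intro p ⟨s, hs⟩
  by_cases hp : ∃ i, p i ≠ 0
  swap
  · push Not at hp
    exact hrat p fun i => ⟨0, by simp [hp i]⟩
  have hs' : ∑ i, (p i : ℝ) = s := by rw [← hs]; push_cast; rfl
  obtain ⟨A, c, hc, hcp, hcs, hcA, hcm, hcr, hcord, hcz⟩ := approx_core p hp s hs'
  have key : ∀ u : ℕ → Fin n → ℚ,
      (∀ i, Filter.Tendsto (fun k => (u k i : ℝ)) Filter.atTop (nhds (p i : ℝ))) →
      ∃ q : ℕ → Fin n → ℝ≥0, Filter.Tendsto (fun k => Δ (q k)) Filter.atTop (nhds (Λ p)) ∧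
        ∀ᶠ k in Filter.atTop, (∀ i, (q k i : ℝ) = c (fun i => (u k i : ℝ)) i) ∧
          (∀ i, q k i = 0 ↔ p i = 0) ∧ (∀ i, i ∉ A → ∀ j ∈ A, q k i ≤ q k j) := by
    intro u hu
    have h1 : Filter.Tendsto (fun k => c (fun i => (u k i : ℝ))) Filter.atTop
        (nhds (fun i => (p i : ℝ))) := by
      have := (hc.tendsto (fun i => (p i : ℝ))).comp (tendsto_pi_nhds.2 hu)
      rwa [hcp] at this
    have h2 := tendsto_pi_nhds.1 h1
    have hpos : ∀ᶠ k in Filter.atTop, ∀ i, p i ≠ 0 → 0 < c (fun i => (u k i : ℝ)) i := by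
      rw [Filter.eventually_all]
      intro i
      by_cases hi : p i = 0
      · simp [hi]
      · have : (0 : ℝ) < p i := by exact_mod_cast pos_iff_ne_zero.2 hi
        filter_upwards [(h2 i).eventually_const_lt this] with k hk _ using hk
    have hord : ∀ᶠ k in Filter.atTop, ∀ i j, i ∉ A → j ∈ A →
        c (fun i => (u k i : ℝ)) i < c (fun i => (u k i : ℝ)) j := by
      rw [Filter.eventually_all]
      intro i
      rw [Filter.eventually_all]
      intro j
      by_cases hi : i ∉ A ∧ j ∈ A
      · have : (p i : ℝ) < p j := by exact_mod_cast hcord i hi.1 j hi.2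
        filter_upwards [(h2 i).eventually_lt (h2 j) this] with k hk _ _ using hk
      · exact Filter.Eventually.of_forall fun k h h' => absurd ⟨h, h'⟩ hi
    have hval : ∀ᶠ k in Filter.atTop, ∀ i,
        ((c (fun i => (u k i : ℝ)) i).toNNReal : ℝ) = c (fun i => (u k i : ℝ)) i := by
      filter_upwards [hpos] with k hk i
      by_cases hi : p i = 0
      · simp [hcz i hi]
      · exact Real.coe_toNNReal _ (hk i hi).le
    refine ⟨fun k i => (c (fun i => (u k i : ℝ)) i).toNNReal, ?_, ?_⟩
    · have h3 : Filter.Tendsto (fun k i => (c (fun i => (u k i : ℝ)) i).toNNReal) Filter.atTop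
          (nhds p) := by
        refine tendsto_pi_nhds.2 fun i => ?_
        have := (continuous_real_toNNReal.tendsto _).comp (h2 i)
        simpa [Function.comp_def] using this
      refine ((hΛ.tendsto p).comp h3).congr' ?_
      filter_upwards [hval] with k hk
      refine (hrat _ fun i => ?_).symm
      rw [hk i]
      exact hcr (u k) i
    · filter_upwards [hpos, hord, hval] with k hk1 hk2 hk3
      refine ⟨hk3, fun i => ⟨fun h => ?_, fun h => ?_⟩, fun i hi j hj => ?_⟩
      · by_contra h'
        exact absurd (Real.toNNReal_eq_zero.1 h) (not_le.2 (hk1 i h'))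
      · simp [hcz i h]
      · exact Real.toNNReal_le_toNNReal (hk2 i j hi hj).le
  apply le_antisymm
  · skip
    choose v hv1 hv2 hv3 using fun i => Real.exists_seq_rat_strictMono_tendsto (p i : ℝ)
    obtain ⟨q, hq, hev⟩ := key (fun k i => v i k) hv3
    refine ge_of_tendsto hq ?_
    filter_upwards [hev] with k ⟨h1, h2, h3⟩
    refine hmono _ _ (majMod_of (q k) p A ?_ ?_ ?_ h3 h2)
    · rw [Finset.sum_congr rfl fun i _ => h1 i, hcs, hs']
    · intro i hi
      rw [← NNReal.coe_le_coe, h1, hcA _ i hi]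
      exact (hv2 i k).le
    · intro i hi
      rw [← NNReal.coe_le_coe, h1]
      have := hcm (fun i => (v i k : ℝ)) (fun i => (p i : ℝ)) (fun i => (hv2 i k).le) i hi
      rwa [hcp] at this
  · choose v hv1 hv2 hv3 using fun i => Real.exists_seq_rat_strictAnti_tendsto (p i : ℝ)
    obtain ⟨q, hq, hev⟩ := key (fun k i => v i k) hv3
    refine le_of_tendsto hq ?_
    filter_upwards [hev] with k ⟨h1, h2, h3⟩
    refine hmono _ _ (majMod_of p (q k) A ?_ ?_ ?_ (fun i hi j hj => (hcord i hi j hj).le)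
      fun i => (h2 i).symm)
    · rw [Finset.sum_congr rfl fun i _ => h1 i, hcs, hs']
    · intro i hi
      rw [← NNReal.coe_le_coe, h1, hcA _ i hi]
      exact (hv2 i k).le
    · intro i hi
      rw [← NNReal.coe_le_coe, h1]
      have := hcm (fun i => (p i : ℝ)) (fun i => (v i k : ℝ)) (fun i => (hv2 i k).le) i hi
      rwa [hcp] at this
end
end

section
/- Let Δ assign to every finite vector with nonnegative entries (of any length) a real number Δ(p), invariantly under permuting entries and under appending zero entries, such that Δ(p ⊕ q) = Δ(p) + Δ(q) for all p, q, and such that Δ is monotone: whenever p ≽₀,₁ q, then Δ(p) ≤ Δ(q). (i) If Δ satisfies the Leibniz rule Δ(p ⊗ q) = Δ(p)·‖q‖₁ + ‖p‖₁·Δ(q) for all p, q, then there exists c ≥ 0 such that Δ(p) = c·H₁(p) for every p with ‖p‖₁ ∈ ℚ; conversely, for every c ≥ 0 the map c·H₁ has all of these properties. (ii) If instead Δ satisfies the Leibniz rule Δ(p ⊗ q) = Δ(p)·‖q‖₀ + ‖p‖₀·Δ(q) for all p, q, then there exists c ≥ 0 such that Δ(p) = c·H'₀(p) for every p with ‖p‖₁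 ∈ ℚ; conversely, for every c ≥ 0 the map c·H'₀ has all of these properties. -/
open scoped BigOperators NNReal

noncomputable section

/-- The basic properties of a monotone additive functional on finite
nonnegative vectors of arbitrary length: permutation invariance, invariance
under appending a zero entry, additivity under direct sums, and antitonicity
for the modified majorization preorder `≽₀,₁`. -/
def DeltaBase (Δ : ∀ n : ℕ, (Fin n → ℝ) → ℝ) : Prop :=
  (∀ (n : ℕ) (σ : Equiv.Perm (Fin n)) (p : Fin n → ℝ), NonnegVec p →
    Δ n (p ∘ σ) = Δ n p) ∧
  (∀ (n : ℕ) (p : Fin n → ℝ), NonnegVec p → Δ (n + 1) (Fin.snoc p 0) = Δ n p) ∧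
  (∀ (m n : ℕ) (p : Fin m → ℝ) (q : Fin n → ℝ), NonnegVec p → NonnegVec q →
    Δ (m + n) (Fin.append p q) = Δ m p + Δ n q) ∧
  (∀ (m n : ℕ) (p : Fin m → ℝ) (q : Fin n → ℝ), NonnegVec p → NonnegVec q →
    MajMod p q → Δ m p ≤ Δ n q)

/-- The Leibniz rule at `‖·‖₁`. -/
def Leib1 (Δ : ∀ n : ℕ, (Fin n → ℝ) → ℝ) : Prop :=
  ∀ (m n : ℕ) (p : Fin m → ℝ) (q : Fin n → ℝ), NonnegVec p → NonnegVec q →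
    Δ (m * n) (kronFin p q) = Δ m p * (∑ j, q j) + (∑ i, p i) * Δ n q

/-- The Leibniz rule at `‖·‖₀`. -/
def Leib0 (Δ : ∀ n : ℕ, (Fin n → ℝ) → ℝ) : Prop :=
  ∀ (m n : ℕ) (p : Fin m → ℝ) (q : Fin n → ℝ), NonnegVec p → NonnegVec q →
    Δ (m * n) (kronFin p q) = Δ m p * (supp0 q : ℝ) + (supp0 p : ℝ) * Δ n q

/-! ### Basic facts on `topSum` -/

lemma le_topSum {ι : Type*} [Fintype ι] (p : ι → ℝ) (k : ℕ) (s : Finset ι) (hs : s.card ≤ k) :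
    ∑ i ∈ s, p i ≤ topSum p k := by
  unfold topSum
  refine le_trans ?_ (le_ciSup (Set.finite_range _).bddAbove s)
  have h : s ∈ {s : Finset ι | s.card ≤ k} := hs
  rw [ciSup_pos h]

lemma topSum_le {ι : Type*} [Fintype ι] (p : ι → ℝ) (k : ℕ) (a : ℝ) (ha : 0 ≤ a)
    (h : ∀ s : Finset ι, s.card ≤ k → ∑ i ∈ s, p i ≤ a) : topSum p k ≤ a := by
  unfold topSum
  exact Real.iSup_le (fun s => Real.iSup_le (fun hs => h s hs) ha) ha

lemma topSum_mono_of {ι κ : Type*} [Fintype ι] [Fintype κ] (p : ι → ℝ) (q : κ → ℝ)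
    (h : ∀ s : Finset κ, ∃ t : Finset ι, t.card ≤ s.card ∧ ∑ i ∈ s, q i ≤ ∑ i ∈ t, p i) (k : ℕ) :
    topSum q k ≤ topSum p k := by
  refine topSum_le q k _ ?_ ?_
  · simpa using le_topSum p k ∅ (by simp)
  · intro s hs
    obtain ⟨t, ht, hle⟩ := h s
    exact hle.trans (le_topSum p k t (ht.trans hs))

/-! ### Sorting -/

lemma sum_le_sum_range_of_antitone (a : ℕ → ℝ) (ha : Antitone a) (h0 : ∀ i, 0 ≤ a i)
    (S : Finset ℕ) (k : ℕ) (hS : S.card ≤ k) : ∑ i ∈ S, a i ≤ ∑ i ∈ Finset.range k, a i := by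
  classical
  have e1 := Finset.sum_inter_add_sum_sdiff S (Finset.range k) a
  have e2 := Finset.sum_inter_add_sum_sdiff (Finset.range k) S a
  have c1 := Finset.card_sdiff_add_card_inter S (Finset.range k)
  have c2 := Finset.card_sdiff_add_card_inter (Finset.range k) S
  rw [Finset.inter_comm (Finset.range k) S] at e2 c2
  rw [Finset.card_range] at c2
  have hc : (S \ Finset.range k).card ≤ (Finset.range k \ S).card := by omega
  have u1 : ∑ i ∈ S \ Finset.range k, a i ≤ (S \ Finset.range k).card • a k := by
    apply Finset.sum_le_card_nsmul
    intro i hi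
    simp at hi
    exact ha hi.2
  have u2 : (Finset.range k \ S).card • a k ≤ ∑ i ∈ Finset.range k \ S, a i := by
    apply Finset.card_nsmul_le_sum
    intro i hi
    simp at hi
    exact ha hi.1.le
  have u3 : (S \ Finset.range k).card • a k ≤ (Finset.range k \ S).card • a k :=
    nsmul_le_nsmul_left (h0 k) hc
  linarith

/-- Existence of a decreasing rearrangement, extended by zero. -/
lemma exists_sorted {n : ℕ} (p : Fin n → ℝ) (hp : NonnegVec p) :
    ∃ a : ℕ → ℝ, Antitone a ∧ (∀ i, 0 ≤ a i) ∧ (∀ i, a i ≠ 0 ↔ i < supp0 p) ∧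
      (∀ k, topSum p k = ∑ i ∈ Finset.range k, a i) ∧
      (∀ G : ℝ → ℝ, G 0 = 0 → ∑ i, G (p i) = ∑ i ∈ Finset.range (supp0 p), G (a i)) := by
  classical
  set σ := Tuple.sort (fun i => - p i) with hσ
  have hmono : Monotone ((fun i => - p i) ∘ σ) := Tuple.monotone_sort _
  have hanti : ∀ i j, i ≤ j → p (σ j) ≤ p (σ i) := by
    intro i j hij
    have := hmono hij
    simp at this
    exact this
  let a : ℕ → ℝ := fun i => if h : i < n then p (σ ⟨i, h⟩) else 0
  have haF : ∀ i : Fin n, a i = p (σ i) := by intro i; simp [a]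
  have ha0 : ∀ i, 0 ≤ a i := by
    intro i
    by_cases h : i < n
    · simp only [a, h, dif_pos]; exact hp _
    · simp [a, h]
  have haa : Antitone a := by
    intro i j hij
    by_cases h : j < n
    · have hi : i < n := by omega
      simp only [a, h, hi, dif_pos]
      exact hanti _ _ hij
    · have : a j = 0 := by simp [a, h]
      rw [this]; exact ha0 i
  have hsumG : ∀ G : ℝ → ℝ, ∑ i, G (p i) = ∑ i ∈ Finset.range n, G (a i) := by
    intro G
    rw [← Equiv.sum_comp σ, ← Fin.sum_univ_eq_sum_range (fun i => G (a i))]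
    exact Finset.sum_congr rfl fun i _ => by rw [haF]
  -- the support of `a`
  have hcard : ((Finset.range n).filter (fun i => a i ≠ 0)).card = supp0 p := by
    have h1 := hsumG (fun x => if x ≠ 0 then 1 else 0)
    unfold supp0
    have h2 : ((Finset.univ.filter fun i => p i ≠ 0).card : ℝ)
        = (((Finset.range n).filter (fun i => a i ≠ 0)).card : ℝ) := by
      rw [Finset.card_filter, Finset.card_filter]
      push_cast
      exact h1
    exact_mod_cast h2.symm
  have hlow : ∀ i, a i ≠ 0 ↔ i < supp0 p := by
    have hn : ∀ i, a i ≠ 0 → i < n := by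
      intro i hi; by_contra h; exact hi (by simp [a, h])
    have hdown : ∀ i j, i ≤ j → a j ≠ 0 → a i ≠ 0 := by
      intro i j hij hj
      have : 0 < a j := lt_of_le_of_ne (ha0 j) (Ne.symm hj)
      exact (lt_of_lt_of_le this (haa hij)).ne'
    intro i
    constructor
    · intro hi
      have hsub : Finset.range (i+1) ⊆ (Finset.range n).filter (fun i => a i ≠ 0) := by
        intro j hj
        have hj' : j ≤ i := by simp at hj; omega
        have := hdown j i hj' hi
        simp only [Finset.mem_filter, Finset.mem_range]
        exact ⟨hn j this, this⟩
      have := Finset.card_le_card hsub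
      rw [hcard, Finset.card_range] at this
      omega
    · intro hi h0
      have hsub : (Finset.range n).filter (fun i => a i ≠ 0) ⊆ Finset.range i := by
        intro j hj
        simp only [Finset.mem_filter, Finset.mem_range] at hj ⊢
        by_contra hji
        exact hdown i j (by omega) hj.2 h0
      have := Finset.card_le_card hsub
      rw [hcard, Finset.card_range] at this
      omega
  refine ⟨a, haa, ha0, hlow, ?_, ?_⟩
  · intro k
    apply le_antisymm
    · apply topSum_le
      · exact Finset.sum_nonneg fun i _ => ha0 i
      · intro s hs
        have : ∑ i ∈ s, p i = ∑ i ∈ s.map ((σ.symm.toEmbedding).trans Fin.valEmbedding), a i := by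
          rw [Finset.sum_map]
          refine Finset.sum_congr rfl fun i _ => ?_
          simp only [Function.Embedding.trans_apply, Equiv.coe_toEmbedding, Fin.valEmbedding_apply]
          rw [haF]; simp
        rw [this]
        exact sum_le_sum_range_of_antitone a haa ha0 _ _ (by simpa using hs)
    · have h1 : ∑ i ∈ Finset.range k, a i
          = ∑ i ∈ (Finset.univ.filter (fun j : Fin n => (j : ℕ) < k)).map σ.toEmbedding, p i := by
        rw [Finset.sum_map, Finset.sum_filter]
        have h2 : ∀ j : Fin n, (if (j : ℕ) < k then p (σ.toEmbedding j) else 0)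
            = (fun i : ℕ => if i < k then a i else 0) j := by
          intro j; simp [haF]
        rw [Finset.sum_congr rfl (fun j _ => h2 j),
          Fin.sum_univ_eq_sum_range (fun i : ℕ => if i < k then a i else 0), ← Finset.sum_filter]
        symm
        apply Finset.sum_subset
        · intro i hi; simp at hi ⊢; exact hi.2
        · intro i hi hi'
          simp at hi hi'
          have : ¬ i < n := fun h => by have := hi' h; omega
          simp [a, this]
      rw [h1]
      apply le_topSum
      rw [Finset.card_map]
      have : (Finset.univ.filter (fun j : Fin n => (j : ℕ) < k)).map Fin.valEmbedding
          ⊆ Finset.range k := by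
        intro i hi
        simp at hi ⊢
        obtain ⟨j, hj, rfl⟩ := hi
        exact hj
      have := Finset.card_le_card this
      simpa using this
  · intro G hG
    rw [hsumG]
    have hle : supp0 p ≤ n := by
      rw [← hcard]
      exact (Finset.card_filter_le _ _).trans (by simp)
    symm
    apply Finset.sum_subset
    · intro i hi; simp at hi ⊢; omega
    · intro i _ hi
      have : ¬ (a i ≠ 0) := by rw [hlow]; simpa using hi
      rw [not_not.mp this, hG]

lemma abel_ineq (N : ℕ) (w d : ℕ → ℝ) (hw : ∀ i, i + 1 < N → w i ≤ w (i+1))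
    (hd : ∀ k, 0 ≤ ∑ i ∈ Finset.range k, d i) :
    ∀ k, k < N → ∑ i ∈ Finset.range (k+1), w i * d i ≤ w k * ∑ i ∈ Finset.range (k+1), d i := by
  intro k
  induction k with
  | zero => intro _; simp
  | succ k ih =>
    intro hk
    have h1 := ih (by omega)
    rw [Finset.sum_range_succ, Finset.sum_range_succ (f := d)]
    have h2 := mul_le_mul_of_nonneg_right (hw k hk) (hd (k+1))
    linarith

/-- Karamata's inequality in the form needed here. -/
lemma karamata (G w : ℝ → ℝ) (hG0 : G 0 = 0)
    (hG : ∀ x y, 0 < x → 0 < y → G x - G y ≤ w y * (x - y))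
    (hw : ∀ x y, 0 < x → x ≤ y → w y ≤ w x)
    {m n : ℕ} (p : Fin m → ℝ) (q : Fin n → ℝ) (hp : NonnegVec p) (hq : NonnegVec q)
    (h : MajMod p q) : ∑ i, G (p i) ≤ ∑ i, G (q i) := by
  obtain ⟨⟨hsum, hmaj⟩, hsupp⟩ := h
  obtain ⟨a, ha, ha0, haN, haT, haG⟩ := exists_sorted p hp
  obtain ⟨b, hb, hb0, hbN, hbT, hbG⟩ := exists_sorted q hq
  rw [haG G hG0, hbG G hG0, hsupp]
  have hsa := haG (fun x => x) rfl
  have hsb := hbG (fun x => x) rfl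
  rw [hsupp] at haN hsa
  generalize supp0 q = N at *
  have hd : ∀ k, 0 ≤ ∑ i ∈ Finset.range k, (a i - b i) := by
    intro k
    have := hmaj k
    rw [haT, hbT] at this
    rw [Finset.sum_sub_distrib]; linarith
  rcases N with _ | N
  · simp
  have hapos : ∀ i, i < N + 1 → 0 < a i := fun i hi =>
    lt_of_le_of_ne (ha0 i) (Ne.symm ((haN i).2 hi))
  have hbpos : ∀ i, i < N + 1 → 0 < b i := fun i hi =>
    lt_of_le_of_ne (hb0 i) (Ne.symm ((hbN i).2 hi))
  have key := abel_ineq (N+1) (fun i => w (b i)) (fun i => a i - b i)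
    (fun i hi => hw _ _ (hbpos _ hi) (hb (Nat.le_succ i))) hd N (Nat.lt_succ_self N)
  have hz : ∑ i ∈ Finset.range (N+1), (a i - b i) = 0 := by
    rw [Finset.sum_sub_distrib]; linarith
  rw [hz, mul_zero] at key
  have h2 : ∑ i ∈ Finset.range (N+1), (G (a i) - G (b i))
      ≤ ∑ i ∈ Finset.range (N+1), w (b i) * (a i - b i) := by
    apply Finset.sum_le_sum
    intro i hi
    have hi' : i < N+1 := by simpa using hi
    exact hG _ _ (hapos i hi') (hbpos i hi')
  rw [Finset.sum_sub_distrib] at h2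
  linarith

lemma deltaBase_of (G w : ℝ → ℝ) (hG0 : G 0 = 0)
    (hG : ∀ x y, 0 < x → 0 < y → G x - G y ≤ w y * (x - y))
    (hw : ∀ x y, 0 < x → x ≤ y → w y ≤ w x) (c : ℝ) (hc : 0 ≤ c) :
    DeltaBase (fun _ p => c * ∑ i, G (p i)) := by
  refine ⟨?_, ?_, ?_, ?_⟩
  · intro n σ p _
    dsimp only
    rw [← Equiv.sum_comp σ (fun i => G (p i))]
    rfl
  · intro n p _
    dsimp only
    rw [Fin.sum_univ_castSucc]
    simp [hG0]
  · intro m n p q _ _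
    dsimp only
    rw [Fin.sum_univ_add]
    simp [mul_add]
  · intro m n p q hp hq h
    exact mul_le_mul_of_nonneg_left (karamata G w hG0 hG hw p q hp hq h) hc

lemma H1ent_eq {ι : Type*} [Fintype ι] (p : ι → ℝ) : H1ent p = ∑ i, Real.negMulLog (p i) := by
  simp [H1ent, Real.negMulLog]

lemma H0'_eq {ι : Type*} [Fintype ι] (p : ι → ℝ) : H0' p = ∑ i, Real.log (p i) := by
  unfold H0'
  refine Finset.sum_congr rfl fun i _ => ?_
  split_ifs with h
  · simp [h]
  · rfl

lemma sum_kronFin {m n : ℕ} (G : ℝ → ℝ) (p : Fin m → ℝ) (q : Fin n → ℝ) :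
    ∑ i, G (kronFin p q i) = ∑ i, ∑ j, G (p i * q j) := by
  unfold kronFin kron
  rw [Equiv.sum_comp finProdFinEquiv.symm (fun x : Fin m × Fin n => G (p x.1 * q x.2)),
    Fintype.sum_prod_type]

lemma supp0_cast {n : ℕ} (q : Fin n → ℝ) : (supp0 q : ℝ) = ∑ j, if q j = 0 then (0:ℝ) else 1 := by
  unfold supp0
  rw [Finset.card_filter]
  push_cast
  refine Finset.sum_congr rfl fun i _ => ?_
  by_cases h : q i = 0 <;> simp [h]

lemma H1_base (c : ℝ) (hc : 0 ≤ c) :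
    DeltaBase (fun n p => c * H1ent p) ∧ Leib1 (fun n p => c * H1ent p) := by
  simp only [H1ent_eq]
  constructor
  · refine deltaBase_of Real.negMulLog (fun y => - Real.log y - 1) (by simp) ?_ ?_ c hc
    · intro x y hx hy
      have h := Real.log_le_sub_one_of_pos (div_pos hy hx)
      rw [Real.log_div hy.ne' hx.ne'] at h
      have h2 := mul_le_mul_of_nonneg_left h hx.le
      have h3 : x * (y / x - 1) = y - x := by field_simp
      rw [h3] at h2
      simp only [Real.negMulLog]
      nlinarith
    · intro x y hx hxy
      have := Real.log_le_log hx hxy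
      linarith
  · intro m n p q _ _
    dsimp only
    rw [sum_kronFin]
    simp only [Real.negMulLog_mul, Finset.sum_add_distrib, ← Finset.mul_sum, ← Finset.sum_mul]
    ring

lemma H0_base (c : ℝ) (hc : 0 ≤ c) :
    DeltaBase (fun n p => c * H0' p) ∧ Leib0 (fun n p => c * H0' p) := by
  simp only [H0'_eq]
  constructor
  · refine deltaBase_of Real.log (fun y => y⁻¹) (by simp) ?_ ?_ c hc
    · intro x y hx hy
      have h := Real.log_le_sub_one_of_pos (div_pos hx hy)
      rw [Real.log_div hx.ne' hy.ne'] at h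
      have h3 : y⁻¹ * (x - y) = x / y - 1 := by field_simp
      rw [h3]; exact h
    · intro x y hx hxy
      exact inv_anti₀ hx hxy
  · intro m n p q _ _
    dsimp only
    rw [sum_kronFin, supp0_cast, supp0_cast]
    have : ∀ i j, Real.log (p i * q j) = Real.log (p i) * (if q j = 0 then (0:ℝ) else 1)
        + (if p i = 0 then (0:ℝ) else 1) * Real.log (q j) := by
      intro i j
      by_cases h : p i = 0
      · simp [h]
      by_cases h' : q j = 0
      · simp [h']
      rw [Real.log_mul h h']; simp [h, h']
    simp only [this, Finset.sum_add_distrib, ← Finset.mul_sum, ← Finset.sum_mul]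
    ring

/-! ### Consequences of the axioms for the one-entry function -/

lemma delta_eq_sum (Δ : ∀ n : ℕ, (Fin n → ℝ) → ℝ) (hΔ : DeltaBase Δ) :
    ∀ (n : ℕ) (p : Fin n → ℝ), NonnegVec p → Δ n p = ∑ i, Δ 1 (fun _ => p i) := by
  obtain ⟨_, _, hadd, _⟩ := hΔ
  intro n
  induction n with
  | zero =>
    intro p hp
    have h := hadd 0 0 p p hp hp
    have h1 : Fin.append p p = p := by ext i; exact i.elim0
    rw [h1] at h
    simp at h ⊢
    exact h
  | succ n ih =>
    intro p hp
    have h := hadd n 1 (fun i => p i.castSucc) (fun _ => p (Fin.last n)) (fun i => hp _)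
      (fun i => hp _)
    have h1 : Fin.append (fun i : Fin n => p i.castSucc) (fun _ : Fin 1 => p (Fin.last n)) = p := by
      rw [Fin.append_right_eq_snoc]
      exact Fin.snoc_init_self p
    rw [h1, ih _ (fun i => hp _)] at h
    rw [h, Fin.sum_univ_castSucc]

lemma delta_zero (Δ : ∀ n : ℕ, (Fin n → ℝ) → ℝ) (hΔ : DeltaBase Δ) :
    Δ 1 (fun _ => 0) = 0 := by
  have h := hΔ.2.1 0 Fin.elim0 (fun i => i.elim0)
  rw [delta_eq_sum Δ hΔ 0 _ (fun i => i.elim0)] at h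
  have h1 : (Fin.snoc (Fin.elim0 : Fin 0 → ℝ) 0 : Fin (0 + 1) → ℝ) = fun _ => 0 := by
    ext i
    have : i = Fin.last 0 := Fin.fin_one_eq_zero i
    rw [this, Fin.snoc_last]
  rw [h1] at h
  simpa using h

lemma supp0_pos {n : ℕ} (p : Fin n → ℝ) (hp : ∀ i, 0 < p i) : supp0 p = n := by
  unfold supp0
  rw [Finset.filter_true_of_mem (fun i _ => (hp i).ne')]
  simp

lemma delta_wright (Δ : ∀ n : ℕ, (Fin n → ℝ) → ℝ) (hΔ : DeltaBase Δ) (x y x' y' : ℝ)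
    (hx : 0 < x) (h1 : x ≤ x') (h2 : x ≤ y') (hs : x + y = x' + y') :
    Δ 1 (fun _ => x) + Δ 1 (fun _ => y) ≤ Δ 1 (fun _ => x') + Δ 1 (fun _ => y') := by
  have hy : 0 < y := by linarith
  have hx' : 0 < x' := by linarith
  have hy' : 0 < y' := by linarith
  have hp : ∀ i, 0 < ![x, y] i := by intro i; fin_cases i <;> simpa
  have hq : ∀ i, 0 < ![x', y'] i := by intro i; fin_cases i <;> simpa
  have h := hΔ.2.2.2 2 2 ![x, y] ![x', y'] (fun i => (hp i).le) (fun i => (hq i).le)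
    ⟨⟨by simpa using hs, topSum_mono_of _ _ ?_⟩, by rw [supp0_pos _ hp, supp0_pos _ hq]⟩
  · rw [delta_eq_sum Δ hΔ 2 _ (fun i => (hp i).le),
      delta_eq_sum Δ hΔ 2 _ (fun i => (hq i).le)] at h
    simpa [Fin.sum_univ_two] using h
  · intro s
    by_cases hc : s.card ≤ 1
    · rcases Nat.le_one_iff_eq_zero_or_eq_one.1 hc with h0 | h0
      · rw [Finset.card_eq_zero] at h0
        exact ⟨∅, by simp, by simp [h0]⟩
      · obtain ⟨i, rfl⟩ := Finset.card_eq_one.1 h0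
        refine ⟨{1}, by simp, ?_⟩
        simp only [Finset.sum_singleton]
        fin_cases i <;> simp <;> linarith
    · refine ⟨Finset.univ, by simp; omega, ?_⟩
      calc ∑ i ∈ s, ![x', y'] i ≤ ∑ i, ![x', y'] i :=
            Finset.sum_le_sum_of_subset_of_nonneg (Finset.subset_univ _)
              (fun i _ _ => (hq i).le)
        _ = _ := by simpa using hs.symm

lemma delta_uniform (Δ : ∀ n : ℕ, (Fin n → ℝ) → ℝ) (hΔ : DeltaBase Δ) (n : ℕ) (hn : 1 ≤ n)
    (ε : ℝ) (h0 : 0 < ε) (hε : ε ≤ 1 / (n + 1)) :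
    n * Δ 1 (fun _ => (1 - ε) / n) + Δ 1 (fun _ => ε) ≤ (n + 1) * Δ 1 (fun _ => 1 / (n + 1 : ℝ)) := by
  have hn' : (1 : ℝ) ≤ n := by exact_mod_cast hn
  have hn0 : (0 : ℝ) < n := by linarith
  rw [le_div_iff₀ (by linarith)] at hε
  have hpos : 0 < (1 - ε) / n := by
    apply div_pos _ hn0
    nlinarith
  have hge : 1 / (n + 1 : ℝ) ≤ (1 - ε) / n := by
    rw [div_le_div_iff₀ (by linarith) hn0]; nlinarith
  let p : Fin (n+1) → ℝ := Fin.snoc (fun _ : Fin n => (1 - ε) / n) ε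
  let q : Fin (n+1) → ℝ := fun _ => 1 / (n + 1 : ℝ)
  have hp : ∀ i, 0 < p i := by
    intro i
    refine Fin.lastCases ?_ (fun j => ?_) i
    · simpa [p] using h0
    · simpa [p] using hpos
  have hq : ∀ i, 0 < q i := by intro i; simp only [q]; positivity
  have hsp : ∑ i, p i = 1 := by
    rw [Fin.sum_univ_castSucc]; simp [p]; field_simp; ring
  have hsq : ∑ i, q i = 1 := by
    simp [q]; field_simp
  have h := hΔ.2.2.2 (n+1) (n+1) p q (fun i => (hp i).le) (fun i => (hq i).le)
    ⟨⟨by rw [hsp, hsq], topSum_mono_of _ _ ?_⟩, by rw [supp0_pos _ hp, supp0_pos _ hq]⟩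
  · rw [delta_eq_sum Δ hΔ _ _ (fun i => (hp i).le),
      delta_eq_sum Δ hΔ _ _ (fun i => (hq i).le), Fin.sum_univ_castSucc] at h
    simpa [p, q] using h
  · intro s
    by_cases hc : s.card ≤ n
    · obtain ⟨t, ht⟩ := Finset.exists_subset_card_eq (s := (Finset.univ : Finset (Fin n)))
        (n := s.card) (by simpa using hc)
      refine ⟨t.map Fin.castSuccEmb, by simp [ht.2], ?_⟩
      rw [Finset.sum_map]
      simp only [p, q, Fin.coe_castSuccEmb, Fin.snoc_castSucc, Finset.sum_const, ht.2]
      exact nsmul_le_nsmul_right hge _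
    · refine ⟨Finset.univ, by simp; omega, ?_⟩
      rw [hsp, ← hsq]
      exact Finset.sum_le_sum_of_subset_of_nonneg (Finset.subset_univ _)
              (fun i _ _ => (hq i).le)

/-! ### The case of `‖·‖₀` -/

lemma additive_nonneg_linear (φ : ℝ → ℝ) (hadd : ∀ x y, φ (x + y) = φ x + φ y)
    (hpos : ∀ x, 0 ≤ x → 0 ≤ φ x) (t : ℝ) : φ t = t * φ 1 := by
  let ψ : ℝ →+ ℝ := AddMonoidHom.mk' φ hadd
  have hψ : ∀ x, φ x = ψ x := fun x => rfl
  have hq : ∀ q : ℚ, φ q = q * φ 1 := by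
    intro q
    have := map_ratCast_smul ψ ℝ ℝ q (1:ℝ)
    simpa [hψ] using this
  have hmono : ∀ x y, x ≤ y → φ x ≤ φ y := by
    intro x y hxy
    have := hpos (y - x) (by linarith)
    have h2 := hadd x (y - x)
    rw [add_sub_cancel] at h2
    linarith
  have h1 : 0 ≤ φ 1 := hpos 1 zero_le_one
  rcases h1.eq_or_lt with h | h
  · obtain ⟨a, ha⟩ := exists_rat_lt t
    obtain ⟨b, hb⟩ := exists_rat_gt t
    have e1 := hmono _ _ ha.le
    have e2 := hmono _ _ hb.le
    rw [hq, ← h] at e1 e2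
    rw [← h]; linarith
  · apply le_antisymm
    · by_contra hlt
      push Not at hlt
      rw [← lt_div_iff₀ h] at hlt
      obtain ⟨q, h2, h3⟩ := exists_rat_btwn hlt
      have := hmono _ _ h2.le
      rw [hq] at this
      rw [lt_div_iff₀ h] at h3
      linarith
    · by_contra hlt
      push Not at hlt
      rw [← div_lt_iff₀ h] at hlt
      obtain ⟨q, h2, h3⟩ := exists_rat_btwn hlt
      have := hmono _ _ h3.le
      rw [hq] at this
      rw [div_lt_iff₀ h] at h2
      linarith

lemma core0 (f : ℝ → ℝ) (hmul : ∀ x y, 0 < x → 0 < y → f (x * y) = f x + f y)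
    (hW : ∀ x y x' y', 0 < x → x ≤ x' → x ≤ y' → x + y = x' + y' → f x + f y ≤ f x' + f y') :
    ∃ c, 0 ≤ c ∧ ∀ x, 0 < x → f x = c * Real.log x := by
  have hnn : ∀ t, 1 ≤ t → 0 ≤ f t := by
    intro t ht
    -- (1 + y)² / (4 y) = t
    set r := Real.sqrt (t * t - t) with hr
    have hr2 : r * r = t * t - t := Real.mul_self_sqrt (by nlinarith)
    have hr0 : 0 ≤ r := Real.sqrt_nonneg _
    have hrt : r < t := by nlinarith
    set x := t - r with hx
    set y := t + r with hy
    have hx0 : 0 < x := by linarith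
    have hy0 : 0 < y := by linarith
    have h := hW x y t t hx0 (by linarith) (by linarith) (by rw [hx, hy]; ring)
    have e1 : x * y = t := by simp only [hx, hy]; linarith
    rw [← hmul x y hx0 hy0, e1] at h
    linarith
  refine ⟨f (Real.exp 1), hnn _ (Real.one_le_exp zero_le_one), ?_⟩
  intro x hx
  have := additive_nonneg_linear (fun t => f (Real.exp t))
    (fun a b => by rw [Real.exp_add, hmul _ _ (Real.exp_pos a) (Real.exp_pos b)])
    (fun a ha => hnn _ (Real.one_le_exp ha)) (Real.log x)
  simp only [Real.exp_log hx] at this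
  rw [this, mul_comm]

lemma kronFin_one (Δ : ∀ n : ℕ, (Fin n → ℝ) → ℝ) (x y : ℝ) :
    Δ (1 * 1) (kronFin (fun _ : Fin 1 => x) (fun _ : Fin 1 => y)) = Δ 1 (fun _ => x * y) := rfl

lemma part0 (Δ : ∀ n : ℕ, (Fin n → ℝ) → ℝ) (hΔ : DeltaBase Δ) (hL : Leib0 Δ) :
    ∃ c : ℝ, 0 ≤ c ∧ ∀ (n : ℕ) (p : Fin n → ℝ), NonnegVec p → Δ n p = c * H0' p := by
  obtain ⟨c, hc, hf⟩ := core0 (fun x => Δ 1 (fun _ => x)) (by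
    intro x y hx hy
    have h := hL 1 1 (fun _ => x) (fun _ => y) (fun _ => hx.le) (fun _ => hy.le)
    rw [kronFin_one Δ, supp0_pos _ (fun _ => hx), supp0_pos _ (fun _ => hy)] at h
    simpa using h) (fun x y x' y' => delta_wright Δ hΔ x y x' y')
  refine ⟨c, hc, fun n p hp => ?_⟩
  rw [delta_eq_sum Δ hΔ n p hp, H0'_eq, Finset.mul_sum]
  refine Finset.sum_congr rfl fun i _ => ?_
  rcases (hp i).eq_or_lt with h | h
  · rw [← h, delta_zero Δ hΔ]; simp
  · exact hf _ h

/-! ### The case of `‖·‖₁` -/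

lemma mono_additive_log (L : ℕ → ℝ) (hmul : ∀ m n, 1 ≤ m → 1 ≤ n → L (m * n) = L m + L n)
    (hmono : ∀ m n, 1 ≤ m → m ≤ n → L m ≤ L n) :
    ∃ c, 0 ≤ c ∧ ∀ n, 1 ≤ n → L n = c * Real.log n := by
  have h1 : L 1 = 0 := by
    have := hmul 1 1 le_rfl le_rfl
    simp at this; exact this
  have hpow : ∀ n k : ℕ, 1 ≤ n → L (n ^ k) = k * L n := by
    intro n k hn
    induction k with
    | zero => simp [h1]
    | succ k ih =>
      rw [pow_succ, hmul _ _ (Nat.one_le_pow _ _ hn) hn, ih]; push_cast; ring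
  have hl2 : 0 < Real.log 2 := Real.log_pos (by norm_num)
  have h2 : 0 ≤ L 2 := by
    have := hmono 1 2 le_rfl (by norm_num)
    linarith
  refine ⟨L 2 / Real.log 2, div_nonneg h2 hl2.le, ?_⟩
  intro n hn
  have key : ∀ k : ℕ, |(k : ℝ) * (L n * Real.log 2 - L 2 * Real.log n)| ≤ L 2 * Real.log 2 := by
    intro k
    set j := Nat.log 2 (n ^ k) with hj
    have hnk : n ^ k ≠ 0 := by have := Nat.one_le_pow k n hn; omega
    have a1 : 2 ^ j ≤ n ^ k := Nat.pow_log_le_self 2 hnk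
    have a2 : n ^ k ≤ 2 ^ (j + 1) := (Nat.lt_pow_succ_log_self (by norm_num) _).le
    have b1 := hmono _ _ (Nat.one_le_pow _ _ (by norm_num)) a1
    have b2 := hmono _ _ (Nat.one_le_pow _ _ hn) a2
    rw [hpow 2 _ (by norm_num), hpow n _ hn] at b1 b2
    have npos : (0 : ℝ) < n := by exact_mod_cast hn
    have c1 : Real.log ((2:ℝ) ^ j) ≤ Real.log ((n : ℝ) ^ k) :=
      Real.log_le_log (by positivity) (by exact_mod_cast a1)
    have c2 : Real.log ((n : ℝ) ^ k) ≤ Real.log ((2:ℝ) ^ (j+1)) :=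
      Real.log_le_log (by positivity) (by exact_mod_cast a2)
    rw [Real.log_pow, Real.log_pow] at c1 c2
    push_cast at b2 c2
    rw [abs_le]
    have d1 := mul_le_mul_of_nonneg_right b1 hl2.le
    have d2 := mul_le_mul_of_nonneg_right b2 hl2.le
    have d3 := mul_le_mul_of_nonneg_left c1 h2
    have d4 := mul_le_mul_of_nonneg_left c2 h2
    constructor <;> nlinarith
  have hz : L n * Real.log 2 - L 2 * Real.log n = 0 := by
    by_contra hne
    have hp : 0 < |L n * Real.log 2 - L 2 * Real.log n| := abs_pos.2 hne
    obtain ⟨k, hk⟩ := exists_nat_gt (L 2 * Real.log 2 / |L n * Real.log 2 - L 2 * Real.log n|)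
    rw [div_lt_iff₀ hp] at hk
    have := key k
    rw [abs_mul, Nat.abs_cast] at this
    linarith
  field_simp
  linarith

lemma core1 (f : ℝ → ℝ) (hmul : ∀ x y, 0 < x → 0 < y → f (x * y) = f x * y + x * f y)
    (hW : ∀ x y x' y', 0 < x → x ≤ x' → x ≤ y' → x + y = x' + y' → f x + f y ≤ f x' + f y')
    (hU : ∀ n : ℕ, 1 ≤ n → ∀ ε : ℝ, 0 < ε → ε ≤ 1 / (n + 1) →
      n * f ((1 - ε) / n) + f ε ≤ (n + 1) * f (1 / (n + 1))) :
    ∃ c, 0 ≤ c ∧ (∀ x y, 0 < x → 0 < y → f (x + y) - c * Real.negMulLog (x + y)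
        = (f x - c * Real.negMulLog x) + (f y - c * Real.negMulLog y)) ∧
      ∀ q : ℚ, 0 < q → f q = c * Real.negMulLog q := by
  have f1 : f 1 = 0 := by
    have := hmul 1 1 one_pos one_pos
    simp at this; exact this
  obtain ⟨h, hh⟩ : ∃ h : ℝ → ℝ, ∀ x, h x = f x + f (1 - x) := ⟨_, fun _ => rfl⟩
  have hmono : ∀ x y, 0 < x → x ≤ y → y ≤ 1 / 2 → h x ≤ h y := by
    intro x y hx hxy hy
    rw [hh, hh]
    exact hW _ _ _ _ hx hxy (by linarith) (by ring)
  -- homogeneity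
  have hF : ∀ x y, 0 < x → 0 < y → f x + f y = f (x + y) + (x + y) * h (x / (x + y)) := by
    intro x y hx hy
    have hs : 0 < x + y := by linarith
    have e1 := hmul (x + y) (x / (x + y)) hs (div_pos hx hs)
    have e2 := hmul (x + y) (y / (x + y)) hs (div_pos hy hs)
    rw [mul_div_cancel₀ _ hs.ne'] at e1 e2
    have e3 : 1 - x / (x + y) = y / (x + y) := by field_simp; ring
    rw [hh, e3, e1, e2]
    field_simp
    ring
  have hstep : ∀ ε, 0 < ε → ε ≤ 1 / 4 → ε * h (2 * ε) + 2 * ε * h (1 / 2) ≤ h ε := by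
    intro ε h0 h4
    have e1 := hF ε (1 - 2 * ε) h0 (by linarith)
    have e2 := hF ε ε h0 h0
    have e3 : ε / (ε + ε) = 1 / 2 := by field_simp; norm_num
    have e4 : ε + (1 - 2 * ε) = 1 - ε := by ring
    have e5 : ε + ε = 2 * ε := by ring
    rw [e4] at e1
    rw [e3, e5] at e2
    have m := hmono (ε / (1 - ε)) (2 * ε) (div_pos h0 (by linarith))
      (by rw [div_le_iff₀ (by linarith)]; nlinarith) (by linarith)
    have m2 := mul_le_mul_of_nonneg_left m (show 0 ≤ 1 - ε by linarith)
    have g1 := hh ε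
    have g2 := hh (2 * ε)
    linarith
  have hb1 : 0 ≤ h (1 / 2) := by
    have a1 := hstep (1 / 4) (by norm_num) le_rfl
    have a2 := hmono (1 / 4) (1 / 2) (by norm_num) (by norm_num) le_rfl
    rw [show (2 : ℝ) * (1 / 4) = 1 / 2 by norm_num] at a1
    linarith
  have hbk : ∀ k : ℕ, 0 ≤ h ((1 / 2) ^ (k + 1)) := by
    intro k
    induction k with
    | zero => simpa using hb1
    | succ k ih =>
      have hp : (0 : ℝ) < (1 / 2) ^ (k + 1 + 1) := by positivity
      have hle : ((1 : ℝ) / 2) ^ (k + 1 + 1) ≤ 1 / 4 := by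
        have : ((1 : ℝ) / 2) ^ k ≤ 1 := pow_le_one₀ (by norm_num) (by norm_num)
        rw [pow_succ, pow_succ]; linarith
      have a := hstep _ hp hle
      rw [show (2 : ℝ) * (1 / 2) ^ (k + 1 + 1) = (1 / 2) ^ (k + 1) by
        rw [pow_succ _ (k + 1)]; ring] at a
      have b1 := mul_nonneg hp.le ih
      have b2 := mul_nonneg (pow_nonneg (show (0:ℝ) ≤ 1 / 2 by norm_num) (k + 1)) hb1
      linarith
  have hnn : ∀ x, 0 < x → x ≤ 1 / 2 → 0 ≤ h x := by
    intro x hx hx2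
    obtain ⟨k, hk⟩ := exists_pow_lt_of_lt_one hx (show (1 / 2 : ℝ) < 1 by norm_num)
    refine (hbk k).trans (hmono _ _ (by positivity) ?_ hx2)
    refine le_trans ?_ hk.le
    rw [pow_succ]
    have : (0 : ℝ) < (1 / 2) ^ k := by positivity
    linarith
  -- values at integers
  have hinv : ∀ n : ℕ, 1 ≤ n → (n : ℝ) * f (1 / n) = - f n / n := by
    intro n hn
    have n0 : (0 : ℝ) < n := by exact_mod_cast hn
    have e := hmul n (1 / n) n0 (by positivity)
    rw [mul_one_div_cancel n0.ne', f1] at e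
    field_simp at e ⊢
    linarith
  obtain ⟨L, hLd⟩ : ∃ L : ℕ → ℝ, ∀ n, L n = - f n / n := ⟨_, fun _ => rfl⟩
  obtain ⟨c, hc, hL⟩ := mono_additive_log L (by
    intro m n hm hn
    have m0 : (0 : ℝ) < m := by exact_mod_cast hm
    have n0 : (0 : ℝ) < n := by exact_mod_cast hn
    rw [hLd, hLd, hLd]
    push_cast
    rw [hmul _ _ m0 n0]
    field_simp
    ring) (by
    intro m n hm hmn
    induction n, hmn using Nat.le_induction with
    | base => exact le_rfl
    | succ n hmn ih =>
      refine ih.trans ?_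
      have hn : 1 ≤ n := hm.trans hmn
      have n0 : (0 : ℝ) < n := by exact_mod_cast hn
      have n1 : (1 : ℝ) ≤ n := by exact_mod_cast hn
      have key : ∀ ε : ℝ, 0 < ε → ε ≤ 1 / (n + 1) → (1 - ε) * L n ≤ L (n + 1) := by
        intro ε h0 h1
        have hε : ε ≤ 1 / 2 := h1.trans (by
          apply one_div_le_one_div_of_le <;> linarith)
        have a := hU n hn ε h0 h1
        have b := hinv (n + 1) (by omega)
        push_cast at b
        have d := hmul (1 - ε) (1 / n) (by linarith) (by positivity)
        rw [mul_one_div] at d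
        have e := hinv n hn
        have g := hnn ε h0 hε
        rw [hh] at g
        rw [← hLd] at e
        have b' : - f ((n : ℝ) + 1) / ((n : ℝ) + 1) = L (n + 1) := by rw [hLd]; push_cast; rfl
        rw [b'] at b
        rw [d] at a
        have d2 : (n : ℝ) * (f (1 - ε) * (1 / n) + (1 - ε) * f (1 / n))
            = f (1 - ε) + (1 - ε) * (n * f (1 / n)) := by
          field_simp
        rw [d2, e, b] at a
        linarith
      by_contra hlt
      push Not at hlt
      set d := L n - L (n + 1) with hd
      have hd0 : 0 < d := by linarith
      have hA : 0 < |L n| + 1 := by positivity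
      have k := key (min (1 / (n + 1)) (d / (2 * (|L n| + 1)))) (by positivity) (min_le_left _ _)
      set ε := min (1 / ((n : ℝ) + 1)) (d / (2 * (|L n| + 1))) with hεd
      have hε0 : 0 < ε := by positivity
      have hε : ε * (2 * (|L n| + 1)) ≤ d := by
        rw [← le_div_iff₀ (by positivity)]; exact min_le_right _ _
      have := mul_le_mul_of_nonneg_left (le_abs_self (L n)) hε0.le
      nlinarith)
  have fnat : ∀ n : ℕ, 1 ≤ n → f n = - c * n * Real.log n := by
    intro n hn
    have n0 : (0 : ℝ) < n := by exact_mod_cast hn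
    have := hL n hn
    rw [hLd] at this
    field_simp at this
    linarith
  have frat : ∀ q : ℚ, 0 < q → f q = c * Real.negMulLog q := by
    intro q hq
    have a1 : 1 ≤ q.num.natAbs := by
      have := Rat.num_pos.2 hq
      omega
    have b1 : 1 ≤ q.den := q.den_pos
    obtain ⟨a, ha⟩ : ∃ a, a = q.num.natAbs := ⟨_, rfl⟩
    obtain ⟨b, hb⟩ : ∃ b, b = q.den := ⟨_, rfl⟩
    rw [← ha] at a1
    rw [← hb] at b1
    have a0 : (0 : ℝ) < a := by exact_mod_cast a1
    have b0 : (0 : ℝ) < b := by exact_mod_cast b1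
    have hqe : (q : ℝ) = a * (1 / b) := by
      have h1 : (q.num : ℝ) = a := by
        have : (q.num.natAbs : ℤ) = q.num := by
          have := Rat.num_pos.2 hq
          omega
        rw [ha, ← Int.cast_natCast (R := ℝ), this]
      rw [Rat.cast_def, h1, hb, mul_one_div]
    rw [hqe, hmul _ _ a0 (by positivity), Real.negMulLog,
      Real.log_mul a0.ne' (by positivity), one_div, Real.log_inv, ← one_div]
    have e := hinv b b1
    rw [fnat b b1] at e
    have e' : f (1 / b) = c * Real.log b / b := by
      field_simp at e ⊢
      linarith
    rw [e', fnat a a1]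
    field_simp
    ring
  have hrat : ∀ q : ℚ, 0 < q → q < 1 → h q = c * Real.binEntropy q := by
    intro q h0 h1
    rw [hh, Real.binEntropy_eq_negMulLog_add_negMulLog_one_sub, frat q h0]
    have := frat (1 - q) (by linarith)
    push_cast at this
    rw [this]; ring
  have hcont : Continuous (fun x => c * Real.binEntropy x) :=
    continuous_const.mul Real.binEntropy_continuous
  have hhalf : ∀ x, 0 < x → x ≤ 1 / 2 → h x = c * Real.binEntropy x := by
    intro x h0 h2
    rcases h2.eq_or_lt with h2 | h2
    · have := hrat (1 / 2) (by norm_num) (by norm_num)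
      push_cast at this
      rw [h2]; exact this
    apply le_antisymm
    · by_contra hlt
      push Not at hlt
      have ev := hcont.continuousAt.eventually_lt (continuousAt_const (y := h x)) hlt
      obtain ⟨δ, hδ, hball⟩ := Metric.eventually_nhds_iff.1 ev
      obtain ⟨q, q1, q2⟩ := exists_rat_btwn (show x < min (x + δ) (1 / 2) from
        lt_min (by linarith) h2)
      rw [lt_min_iff] at q2
      have hq0 : (0 : ℝ) < q := by linarith
      have hq1 : (q : ℝ) < 1 := by linarith
      have A := hball (y := (q : ℝ)) (by rw [Real.dist_eq, abs_lt]; constructor <;> linarith)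
      have B := hmono x q h0 q1.le q2.2.le
      rw [hrat q (by exact_mod_cast hq0) (by exact_mod_cast hq1)] at B
      linarith
    · by_contra hlt
      push Not at hlt
      have ev := (continuousAt_const (y := h x)).eventually_lt hcont.continuousAt hlt
      obtain ⟨δ, hδ, hball⟩ := Metric.eventually_nhds_iff.1 ev
      obtain ⟨q, q1, q2⟩ := exists_rat_btwn (show max (x - δ) 0 < x from
        max_lt (by linarith) h0)
      rw [max_lt_iff] at q1
      have hq1 : (q : ℝ) < 1 := by linarith
      have A := hball (y := (q : ℝ)) (by rw [Real.dist_eq, abs_lt]; constructor <;> linarith)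
      have B := hmono q x q1.2 q2.le h2.le
      rw [hrat q (by exact_mod_cast q1.2) (by exact_mod_cast hq1)] at B
      linarith
  have hall : ∀ x, 0 < x → x < 1 → h x = c * Real.binEntropy x := by
    intro x h0 h1
    rcases le_total x (1 / 2) with h2 | h2
    · exact hhalf x h0 h2
    · have := hhalf (1 - x) (by linarith) (by linarith)
      rw [Real.binEntropy_one_sub, hh] at this
      rw [hh, ← this]
      rw [sub_sub_cancel]; ring
  refine ⟨c, hc, ?_, frat⟩
  intro x y hx hy
  have hs : 0 < x + y := by linarith
  have e := hF x y hx hy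
  rw [hall _ (div_pos hx hs) (by rw [div_lt_one hs]; linarith),
    Real.binEntropy_eq_negMulLog_add_negMulLog_one_sub] at e
  have e3 : 1 - x / (x + y) = y / (x + y) := by field_simp; ring
  rw [e3] at e
  simp only [Real.negMulLog] at e ⊢
  rw [Real.log_div hx.ne' hs.ne', Real.log_div hy.ne' hs.ne'] at e
  have e4 : (x + y) * (c * (-(x / (x + y)) * (Real.log x - Real.log (x + y))
      + -(y / (x + y)) * (Real.log y - Real.log (x + y))))
      = c * (- x * Real.log x - y * Real.log y + (x + y) * Real.log (x + y)) := by
    field_simp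
    ring
  rw [e4] at e
  linarith

lemma part1 (Δ : ∀ n : ℕ, (Fin n → ℝ) → ℝ) (hΔ : DeltaBase Δ) (hL : Leib1 Δ) :
    ∃ c : ℝ, 0 ≤ c ∧ ∀ (n : ℕ) (p : Fin n → ℝ), NonnegVec p →
        (∃ a : ℚ, (∑ i, p i) = a) → Δ n p = c * H1ent p := by
  obtain ⟨c, hc, hadd, hrat⟩ := core1 (fun x => Δ 1 (fun _ => x)) (by
    intro x y hx hy
    have h := hL 1 1 (fun _ => x) (fun _ => y) (fun _ => hx.le) (fun _ => hy.le)
    rw [kronFin_one Δ] at h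
    simpa using h) (fun x y x' y' => delta_wright Δ hΔ x y x' y')
    (fun n hn ε h0 h1 => delta_uniform Δ hΔ n hn ε h0 h1)
  refine ⟨c, hc, ?_⟩
  rintro n p hp ⟨a, ha⟩
  obtain ⟨e, he⟩ : ∃ e : ℝ → ℝ, ∀ x, e x = Δ 1 (fun _ => x) - c * Real.negMulLog x :=
    ⟨_, fun _ => rfl⟩
  have e0 : e 0 = 0 := by rw [he, delta_zero Δ hΔ]; simp
  have eadd : ∀ x y, 0 ≤ x → 0 ≤ y → e (x + y) = e x + e y := by
    intro x y hx hy
    rcases hx.eq_or_lt with h | h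
    · rw [← h, e0]; simp
    rcases hy.eq_or_lt with h' | h'
    · rw [← h', e0]; simp
    rw [he, he, he]
    exact hadd x y h h'
  have esum : ∀ s : Finset (Fin n), e (∑ i ∈ s, p i) = ∑ i ∈ s, e (p i) := by
    classical
    intro s
    induction s using Finset.induction_on with
    | empty => simpa using e0
    | insert i s hi ih =>
      rw [Finset.sum_insert hi, Finset.sum_insert hi, eadd _ _ (hp i)
        (Finset.sum_nonneg fun j _ => hp j), ih]
  have ea : e (∑ i, p i) = 0 := by
    have hnn : 0 ≤ ∑ i, p i := Finset.sum_nonneg fun j _ => hp j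
    rcases hnn.eq_or_lt with h | h
    · rw [← h, e0]
    · rw [ha] at h ⊢
      rw [he, sub_eq_zero]
      exact hrat a (by exact_mod_cast h)
  rw [esum] at ea
  simp only [he, Finset.sum_sub_distrib, ← Finset.mul_sum] at ea
  rw [delta_eq_sum Δ hΔ n p hp, H1ent_eq]
  linarith

/-- **Classification of monotone derivations on the modified majorization
semiring.**  A monotone derivation at `‖·‖₁` is a nonnegative multiple of the
Shannon entropy `H₁` on all vectors of rational total sum, and a monotone
derivation at `‖·‖₀` is a nonnegative multiple of `H₀'` there; conversely
these multiples have all the listed properties. -/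
theorem classification_of_monotone_derivations :
    (∀ Δ : ∀ n : ℕ, (Fin n → ℝ) → ℝ, DeltaBase Δ → Leib1 Δ →
      ∃ c : ℝ, 0 ≤ c ∧ ∀ (n : ℕ) (p : Fin n → ℝ), NonnegVec p →
        (∃ a : ℚ, (∑ i, p i) = a) → Δ n p = c * H1ent p) ∧
    (∀ c : ℝ, 0 ≤ c →
      DeltaBase (fun n p => c * H1ent p) ∧ Leib1 (fun n p => c * H1ent p)) ∧
    (∀ Δ : ∀ n : ℕ, (Fin n → ℝ) → ℝ, DeltaBase Δ → Leib0 Δ →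
      ∃ c : ℝ, 0 ≤ c ∧ ∀ (n : ℕ) (p : Fin n → ℝ), NonnegVec p →
        (∃ a : ℚ, (∑ i, p i) = a) → Δ n p = c * H0' p) ∧
    (∀ c : ℝ, 0 ≤ c →
      DeltaBase (fun n p => c * H0' p) ∧ Leib0 (fun n p => c * H0' p)) := by
  refine ⟨part1, H1_base, fun Δ hΔ hL => ?_, H0_base⟩
  obtain ⟨c, hc, h⟩ := part0 Δ hΔ hL
  exact ⟨c, hc, fun n p hp _ => h n p hp⟩
end
end

section
/- Let d ≥ 1 and let P = (p⁽¹⁾,…,p⁽ᵈ⁾) be a d-tuple of probability vectors of length m with p⁽ᵏ⁾ ≠ p⁽ˡ⁾ for all k ≠ ℓ. Let R = (r⁽¹⁾,…,r⁽ᵈ⁾) and Q = (q⁽¹⁾,…,q⁽ᵈ⁾) be d-tuples of nonzero vectors with nonnegative entries, the columns within each tuple sharing a common support, and suppose there exists a stochastic matrix S with S q⁽ᵏ⁾ = r⁽ᵏ⁾ for all k. Then there exist n ∈ ℕ and a stochastic matrix T such that T ( (p⁽ᵏ⁾)^{⊗n} ⊗ r⁽ᵏ⁾ ) = q⁽ᵏ⁾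 for all k = 1,…,d. In particular, for every d-tuple Q of probability vectors all of whose entries are strictly positive, there exist n ∈ ℕ and a stochastic matrix T with T (p⁽ᵏ⁾)^{⊗n} = q⁽ᵏ⁾ for all k. -/
open scoped BigOperators NNReal

noncomputable section

lemma sqrt_overlap_lt_one {m : ℕ} {p q : Fin m → ℝ} (hp : IsProbVec p) (hq : IsProbVec q)
    (h : p ≠ q) : ∑ i, Real.sqrt (p i) * Real.sqrt (q i) < 1 := by
  obtain ⟨i, hi⟩ := Function.ne_iff.mp h
  have hpos : 0 < ∑ i, (Real.sqrt (p i) - Real.sqrt (q i)) ^ 2 := by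
    apply Finset.sum_pos' (fun _ _ => sq_nonneg _)
    refine ⟨i, Finset.mem_univ _, ?_⟩
    apply sq_pos_of_ne_zero
    intro h0
    exact hi ((Real.sqrt_inj (hp.1 i) (hq.1 i)).mp (sub_eq_zero.mp h0))
  have e : ∑ i, (Real.sqrt (p i) - Real.sqrt (q i)) ^ 2
      = ∑ i, p i + ∑ i, q i - 2 * ∑ i, Real.sqrt (p i) * Real.sqrt (q i) := by
    rw [Finset.mul_sum, ← Finset.sum_add_distrib, ← Finset.sum_sub_distrib]
    refine Finset.sum_congr rfl fun i _ => ?_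
    have h1 := Real.sq_sqrt (hp.1 i)
    have h2 := Real.sq_sqrt (hq.1 i)
    linear_combination h1 + h2
  rw [e, hp.2, hq.2] at hpos
  linarith

lemma sum_kpow {m : ℕ} (p : Fin m → ℝ) (n : ℕ) : ∑ x, kpow p n x = (∑ i, p i) ^ n := by
  unfold kpow
  rw [Fintype.sum_pow]

lemma kpow_nonneg {m : ℕ} {p : Fin m → ℝ} (hp : ∀ i, 0 ≤ p i) (n : ℕ) (x : Fin n → Fin m) :
    0 ≤ kpow p n x := Finset.prod_nonneg fun _ _ => hp _

lemma matrix_power_core {d m : ℕ} (hd : 1 ≤ d)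
    (P : Fin d → Fin m → ℝ) (hP : ∀ k, IsProbVec (P k))
    (hPdist : ∀ k l, k ≠ l → P k ≠ P l) (b : ℕ) (Q : Fin d → Fin b → ℝ)
    (hQ : ∀ k, IsProbVec (Q k)) (hs : ∀ k l j, Q k j ≠ 0 ↔ Q l j ≠ 0) :
    ∃ (n : ℕ) (T : Fin b → (Fin n → Fin m) → ℝ),
        IsStochastic T ∧ ∀ k, matVec T (kpow (P k) n) = Q k := by
  classical
  have : Nonempty (Fin d) := ⟨⟨0, hd⟩⟩
  have hex : ∀ n (x : Fin n → Fin m), ∃ l, ∀ k, kpow (P k) n x ≤ kpow (P l) n x := fun n x =>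
    Finite.exists_max (fun k => kpow (P k) n x)
  choose c hc using hex
  let E : ℕ → Matrix (Fin d) (Fin d) ℝ := fun n => Matrix.of fun l k =>
    ∑ x, if c n x = l then kpow (P k) n x else 0
  have hEsum : ∀ n k, ∑ l, E n l k = 1 := by
    intro n k
    simp only [E, Matrix.of_apply]
    rw [Finset.sum_comm]
    simp [sum_kpow, (hP k).2]
  have hEnn : ∀ n l k, 0 ≤ E n l k := by
    intro n l k
    refine Finset.sum_nonneg fun x _ => ?_
    split_ifs
    · exact kpow_nonneg (hP k).1 _ _
    · exact le_rfl
  have hoff : ∀ n l k, E n l k ≤ (∑ i, Real.sqrt (P k i) * Real.sqrt (P l i)) ^ n := by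
    intro n l k
    rw [← sum_kpow]
    refine Finset.sum_le_sum fun x _ => ?_
    have e : kpow (fun i => Real.sqrt (P k i) * Real.sqrt (P l i)) n x
        = Real.sqrt (kpow (P k) n x) * Real.sqrt (kpow (P l) n x) := by
      simp only [kpow]
      rw [Finset.prod_mul_distrib, Real.sqrt_prod _ (fun i _ => (hP k).1 _),
        Real.sqrt_prod _ (fun i _ => (hP l).1 _)]
    rw [e]
    split_ifs with h
    · have h1 := hc n x k
      rw [h] at h1
      have h2 := kpow_nonneg (hP k).1 n x
      calc kpow (P k) n x = Real.sqrt (kpow (P k) n x) * Real.sqrt (kpow (P k) n x) :=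
            (Real.mul_self_sqrt h2).symm
        _ ≤ _ := by gcongr
    · positivity
  have hlim0 : ∀ l k, l ≠ k → Filter.Tendsto (fun n => E n l k) Filter.atTop (nhds 0) := by
    intro l k hlk
    refine squeeze_zero (fun n => hEnn n l k) (fun n => hoff n l k) ?_
    apply tendsto_pow_atTop_nhds_zero_of_lt_one
    · exact Finset.sum_nonneg fun i _ => by positivity
    · exact sqrt_overlap_lt_one (hP k) (hP l) (hPdist k l hlk.symm)
  have hlim : Filter.Tendsto E Filter.atTop (nhds 1) := by
    refine tendsto_pi_nhds.mpr fun l => ?_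
    refine tendsto_pi_nhds.mpr fun k => ?_
    by_cases h : l = k
    · subst h
      have e : (fun n => E n l l) = fun n => 1 - ∑ l' ∈ Finset.univ.erase l, E n l' l := by
        funext n
        rw [← hEsum n l, ← Finset.add_sum_erase _ _ (Finset.mem_univ l)]
        ring
      rw [e]
      have := (tendsto_finset_sum (Finset.univ.erase l)
        (fun l' hl' => hlim0 l' l (Finset.ne_of_mem_erase hl'))).const_sub 1
      simpa using this
    · rw [Matrix.one_apply_ne h]
      exact hlim0 l k h
  let A : Matrix (Fin b) (Fin d) ℝ := Matrix.of fun j k => Q k j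
  let U : Matrix (Fin d) (Fin d) ℝ → Matrix (Fin b) (Fin d) ℝ := fun M =>
    (M.det)⁻¹ • (A * M.adjugate)
  have hdet : Filter.Tendsto (fun n => (E n).det) Filter.atTop (nhds 1) := by
    have := ((continuous_id.matrix_det : Continuous
      (fun M : Matrix (Fin d) (Fin d) ℝ => M.det)).tendsto 1).comp hlim
    simpa [Function.comp_def] using this
  have hU : Filter.Tendsto (fun n => U (E n)) Filter.atTop (nhds A) := by
    have h1 : Filter.Tendsto (fun n => A * (E n).adjugate) Filter.atTop (nhds A) := by
      have := ((continuous_const.matrix_mul continuous_id.matrix_adjugate : Continuous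
        (fun M : Matrix (Fin d) (Fin d) ℝ => A * M.adjugate)).tendsto 1).comp hlim
      simpa [Function.comp_def] using this
    have := (hdet.inv₀ one_ne_zero).smul h1
    simpa using this
  have hev : ∀ᶠ n in Filter.atTop, ∀ j l, 0 ≤ U (E n) j l := by
    rw [Filter.eventually_all]
    intro j
    rw [Filter.eventually_all]
    intro l
    by_cases hj : Q l j = 0
    · refine Filter.Eventually.of_forall fun n => ?_
      have hz : ∀ k, Q k j = 0 := fun k => by
        by_contra hk
        exact (hs k l j).mp hk hj
      simp [U, A, Matrix.mul_apply, hz]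
    · have ht := tendsto_pi_nhds.mp (tendsto_pi_nhds.mp hU j) l
      have hpos : 0 < A j l := lt_of_le_of_ne ((hQ l).1 j) (Ne.symm hj)
      exact (ht.eventually (lt_mem_nhds hpos)).mono fun n h => h.le
  obtain ⟨n, hn, hdn⟩ := (hev.and (hdet.eventually_ne one_ne_zero)).exists
  have hUE : U (E n) * E n = A := by
    simp only [U]
    rw [Matrix.smul_mul, Matrix.mul_assoc, Matrix.adjugate_mul, Matrix.mul_smul, smul_smul,
      inv_mul_cancel₀ hdn, Matrix.mul_one, one_smul]
  have hcol : ∀ l, ∑ j, U (E n) j l = 1 := by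
    have h1 : Matrix.vecMul (fun l => ∑ j, U (E n) j l) (E n) = Matrix.vecMul 1 (E n) := by
      funext k
      simp only [Matrix.vecMul, dotProduct, Pi.one_apply, one_mul]
      rw [hEsum]
      simp_rw [Finset.sum_mul]
      rw [Finset.sum_comm, ← (hQ k).2]
      refine Finset.sum_congr rfl fun j _ => ?_
      have := congrFun (congrFun hUE j) k
      rw [Matrix.mul_apply] at this
      exact this
    have hu : IsUnit (E n) := (Matrix.isUnit_iff_isUnit_det _).mpr hdn.isUnit
    have h2 := Matrix.vecMul_injective_of_isUnit hu h1
    exact fun l => congrFun h2 l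
  refine ⟨n, fun j x => U (E n) j (c n x), ⟨fun j x => hn _ _, fun x => hcol _⟩, ?_⟩
  intro k
  funext j
  have := congrFun (congrFun hUE j) k
  rw [Matrix.mul_apply] at this
  change _ = A j k
  rw [← this]
  simp only [matVec, E, Matrix.of_apply, Finset.mul_sum]
  rw [Finset.sum_comm]
  refine Finset.sum_congr rfl fun x _ => ?_
  simp

/-- **Power universality in the matrix majorization semiring.**  If the columns
of the stochastic tuple `P` are pairwise distinct, then whenever a tuple `R` is
matrix-majorized by a tuple `Q` (both consisting of nonzero nonnegative vectors
with common support within each tuple), some Kronecker power of `P` tensored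
with `R` matrix-majorizes `Q`.  In particular, every tuple of strictly positive
probability vectors is matrix-majorized by some Kronecker power of `P`. -/
theorem matrix_power_universal
    {d m : ℕ} (hd : 1 ≤ d)
    (P : Fin d → Fin m → ℝ) (hP : ∀ k, IsProbVec (P k))
    (hPdist : ∀ k l, k ≠ l → P k ≠ P l) :
    (∀ (a b : ℕ) (R : Fin d → Fin a → ℝ) (Q : Fin d → Fin b → ℝ),
      (∀ k i, 0 ≤ R k i) → (∀ k, R k ≠ 0) →
      (∀ k l i, R k i ≠ 0 ↔ R l i ≠ 0) →
      (∀ k j, 0 ≤ Q k j) → (∀ k, Q k ≠ 0) →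
      (∀ k l j, Q k j ≠ 0 ↔ Q l j ≠ 0) →
      (∃ S : Fin a → Fin b → ℝ, IsStochastic S ∧ ∀ k, matVec S (Q k) = R k) →
      ∃ (n : ℕ) (T : Fin b → ((Fin n → Fin m) × Fin a) → ℝ),
        IsStochastic T ∧
        ∀ k, matVec T (kron (kpow (P k) n) (R k)) = Q k) ∧
    (∀ (b : ℕ) (Q : Fin d → Fin b → ℝ),
      (∀ k, IsProbVec (Q k)) → (∀ k j, 0 < Q k j) →
      ∃ (n : ℕ) (T : Fin b → (Fin n → Fin m) → ℝ),
        IsStochastic T ∧ ∀ k, matVec T (kpow (P k) n) = Q k) := by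
  refine ⟨?_, ?_⟩
  · intro a b R Q hR hR0 hRs hQ hQ0 hQs ⟨S, hS, hSQ⟩
    have hpos : ∀ k, 0 < ∑ j, Q k j := by
      intro k
      obtain ⟨j, hj⟩ := Function.ne_iff.mp (hQ0 k)
      exact Finset.sum_pos' (fun j _ => hQ k j)
        ⟨j, Finset.mem_univ _, lt_of_le_of_ne (hQ k j) (Ne.symm hj)⟩
    have hsum : ∀ k, ∑ i, R k i = ∑ j, Q k j := by
      intro k
      rw [← hSQ k]
      simp only [matVec]
      rw [Finset.sum_comm]
      refine Finset.sum_congr rfl fun j _ => ?_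
      rw [← Finset.sum_mul, hS.2 j, one_mul]
    obtain ⟨n, T, hT, hTP⟩ := matrix_power_core hd P hP hPdist b
      (fun k j => Q k j / ∑ j, Q k j)
      (fun k => ⟨fun j => div_nonneg (hQ k j) (hpos k).le, by
        rw [← Finset.sum_div, div_self (hpos k).ne']⟩)
      (fun k l j => by
        simp only [ne_eq, div_eq_zero_iff, (hpos k).ne', (hpos l).ne', or_false]
        exact hQs k l j)
    refine ⟨n, fun j y => T j y.1, ⟨fun j y => hT.1 _ _, fun y => hT.2 _⟩, ?_⟩
    intro k
    funext j
    have h := congrFun (hTP k) j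
    simp only [matVec] at h
    simp only [matVec, kron]
    rw [Fintype.sum_prod_type]
    simp only
    have e : ∀ x, ∑ i, T j x * (kpow (P k) n x * R k i)
        = (T j x * kpow (P k) n x) * ∑ j, Q k j := by
      intro x
      rw [← hsum k, Finset.mul_sum]
      exact Finset.sum_congr rfl fun i _ => by ring
    simp_rw [e]
    rw [← Finset.sum_mul, h, div_mul_cancel₀ _ (hpos k).ne']
  · intro b Q hQ hpos
    exact matrix_power_core hd P hP hPdist b Q hQ
      fun k l j => ⟨fun _ => (hpos l j).ne', fun _ => (hpos k j).ne'⟩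
end
end
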